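/- arXiv:2312.15732 — 11 statements merged into one kernel-verified Lean document; each statement's English description precedes it below -/
import Mathlib

section
/- For every group Γ and group homomorphism ω: Γ × Γ → Γ, the map R(ω): K(ω) → K(ω) × K(ω) is well defined (i.e. both components of R(ω)(a) again lie in K(ω)) and is a group isomorphism. Its inverse sends a pair (a, a') ∈ K(ω) × K(ω) to the map b: {0,1}* → Γ with b(ε) = ω(a(ε), a'(ε)), b(0·u) = a(u) and b(1·u) = a'(u) for all u ∈ {0,1}*. -/
/-- `K(ω)`: the subgroup of the product group of `Γ`-valued functions on `{0,1}*`
(pointwise multiplication) consisting of the `a : {0,1}* → Γ` with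
`a u = ω (a (u·0), a (u·1))` for all `u`. -/
def Kgrp {Γ : Type*} [Group Γ] (ω : Γ × Γ →* Γ) : Subgroup (List Bool → Γ) where
  carrier := {a | ∀ u : List Bool, a u = ω (a (u ++ [false]), a (u ++ [true]))}
  mul_mem' := by
    intro a b ha hb u
    simp only [Pi.mul_apply]
    rw [ha u, hb u, ← map_mul, Prod.mk_mul_mk]
  one_mem' := by
    intro u
    simp only [Pi.one_apply]
    rw [show ((1 : Γ), (1 : Γ)) = (1 : Γ × Γ) from rfl, map_one]
  inv_mem' := by
    intro a ha u
    simp only [Pi.inv_apply]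
    rw [ha u, ← map_inv, Prod.inv_mk]

/-- The `i`-th component `Rᵢ(ω) : K(ω) → K(ω)` of `R(ω)`: prepend the letter `i`. -/
def Rcomp {Γ : Type*} [Group Γ] (ω : Γ × Γ →* Γ) (i : Bool) (a : Kgrp ω) : Kgrp ω :=
  ⟨fun u => (a : List Bool → Γ) (i :: u), fun u => a.2 (i :: u)⟩

/-- `R(ω) : K(ω) → K(ω) × K(ω)`, given by deleting a caret at the bottom:
`R(ω)(a) = (a₀, a₁)` with `aᵢ(u) = a(i·u)`. -/
def Rmap {Γ : Type*} [Group Γ] (ω : Γ × Γ →* Γ) (a : Kgrp ω) : Kgrp ω × Kgrp ω :=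
  (Rcomp ω false a, Rcomp ω true a)

/-- The inverse function. -/
def Rinv {Γ : Type*} [Group Γ] (ω : Γ × Γ →* Γ) (p : Kgrp ω × Kgrp ω) : List Bool → Γ
  | [] => ω ((p.1 : List Bool → Γ) [], (p.2 : List Bool → Γ) [])
  | false :: u => (p.1 : List Bool → Γ) u
  | true :: u => (p.2 : List Bool → Γ) u

theorem Rinv_mem {Γ : Type*} [Group Γ] (ω : Γ × Γ →* Γ) (p : Kgrp ω × Kgrp ω) :
    Rinv ω p ∈ Kgrp ω := by
  intro u
  match u with
  | [] => rfl
  | false :: u => exact p.1.2 u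
  | true :: u => exact p.2.2 u

/-- for every group homomorphism `ω : Γ × Γ → Γ`, the map
`R(ω) : K(ω) → K(ω) × K(ω)` is well defined (both components again lie in `K(ω)`)
and is a group isomorphism, whose inverse sends `(a, a')` to the map `b` with
`b ε = ω (a ε, a' ε)`, `b (0·u) = a u` and `b (1·u) = a' u`. -/
theorem stmt0 {Γ : Type*} [Group Γ] (ω : Γ × Γ →* Γ) :
    (∀ a : Kgrp ω,
      (fun u => (a : List Bool → Γ) (false :: u)) ∈ Kgrp ω ∧
      (fun u => (a : List Bool → Γ) (true :: u)) ∈ Kgrp ω) ∧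
    ∃ e : Kgrp ω ≃* Kgrp ω × Kgrp ω,
      (∀ a : Kgrp ω,
        ((e a).1 : List Bool → Γ) = (fun u => (a : List Bool → Γ) (false :: u)) ∧
        ((e a).2 : List Bool → Γ) = (fun u => (a : List Bool → Γ) (true :: u))) ∧
      (∀ p : Kgrp ω × Kgrp ω,
        (e.symm p : List Bool → Γ) [] =
          ω ((p.1 : List Bool → Γ) [], (p.2 : List Bool → Γ) []) ∧
        ∀ u : List Bool,
          (e.symm p : List Bool → Γ) (false :: u) = (p.1 : List Bool → Γ) u ∧
          (e.symm p : List Bool → Γ) (true :: u) = (p.2 : List Bool → Γ) u) := by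
  refine ⟨fun a => ⟨(Rcomp ω false a).2, (Rcomp ω true a).2⟩,
    { toFun := Rmap ω
      invFun := fun p => ⟨Rinv ω p, Rinv_mem ω p⟩
      left_inv := ?_
      right_inv := fun p => rfl
      map_mul' := fun a b => rfl }, fun a => ⟨rfl, rfl⟩, fun p => ⟨rfl, fun u => ⟨rfl, rfl⟩⟩⟩
  intro a
  apply Subtype.ext
  funext u
  match u with
  | [] => exact (a.2 []).symm
  | false :: u => rfl
  | true :: u => rfl
end

section
/- Let Γ be a group and ω: Γ × Γ → Γ a group homomorphism. Suppose K' is a group, R': K' → K' × K' is a group isomorphism, and p: K' → Γ is a group homomorphism satisfying p(a) = ω(p(fst(R'(a))), p(snd(R'(a)))) for all a ∈ K'. Then there exists a unique group homomorphism ψ: K' → K(ω) such that ψ(a)(ε) = p(a) for all a ∈ K' and (ψ × ψ) ∘ R' = R(ω) ∘ ψ. -/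
/-- Walk down the tree along a word, then apply `p`. -/
def walkVal {Γ K' : Type*} [Group Γ] [Group K']
    (R' : K' ≃* K' × K') (p : K' →* Γ) : List Bool → K' → Γ
  | [], a => p a
  | false :: u, a => walkVal R' p u (R' a).1
  | true :: u, a => walkVal R' p u (R' a).2

theorem walkVal_mul {Γ K' : Type*} [Group Γ] [Group K']
    (R' : K' ≃* K' × K') (p : K' →* Γ) (u : List Bool) :
    ∀ a b : K', walkVal R' p u (a * b) = walkVal R' p u a * walkVal R' p u b := by
  induction u with
  | nil => intro a b; simp [walkVal]
  | cons i u ih => intro a b; cases i <;> simp [walkVal, ih]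

theorem walkVal_mem {Γ K' : Type*} [Group Γ] [Group K'] (ω : Γ × Γ →* Γ)
    (R' : K' ≃* K' × K') (p : K' →* Γ)
    (hp : ∀ a : K', p a = ω (p (R' a).1, p (R' a).2)) (u : List Bool) :
    ∀ a : K', walkVal R' p u a
      = ω (walkVal R' p (u ++ [false]) a, walkVal R' p (u ++ [true]) a) := by
  induction u with
  | nil => intro a; exact hp a
  | cons i u ih => intro a; cases i <;> exact ih _

/-- universal property of `(K(ω), R(ω))`: for every group `K'`, group
isomorphism `R' : K' ≃ K' × K'` and homomorphism `p : K' → Γ` with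
`p a = ω (p (R' a).1, p (R' a).2)`, there is a unique group homomorphism
`ψ : K' → K(ω)` with `ψ(a)(ε) = p a` and `(ψ × ψ) ∘ R' = R(ω) ∘ ψ`. -/
theorem stmt1 {Γ K' : Type*} [Group Γ] [Group K'] (ω : Γ × Γ →* Γ)
    (R' : K' ≃* K' × K') (p : K' →* Γ)
    (hp : ∀ a : K', p a = ω (p (R' a).1, p (R' a).2)) :
    ∃! ψ : K' →* Kgrp ω,
      (∀ a : K', (ψ a : List Bool → Γ) [] = p a) ∧
      (∀ a : K', Rmap ω (ψ a) = (ψ (R' a).1, ψ (R' a).2)) := by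
  refine ⟨MonoidHom.mk' (fun a => ⟨fun u => walkVal R' p u a,
    fun u => walkVal_mem ω R' p hp u a⟩) ?_, ⟨?_, ?_⟩, ?_⟩
  · intro a b
    apply Subtype.ext
    funext u
    exact walkVal_mul R' p u a b
  · intro a
    rfl
  · intro a
    rfl
  · rintro φ ⟨h1, h2⟩
    have key : ∀ (u : List Bool) (a : K'), (φ a : List Bool → Γ) u = walkVal R' p u a := by
      intro u
      induction u with
      | nil => exact h1
      | cons i u ih =>
        intro a
        cases i
        · exact (congrArg (fun x => (x.1 : List Bool → Γ) u) (h2 a)).trans (ih _)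
        · exact (congrArg (fun x => (x.2 : List Bool → Γ) u) (h2 a)).trans (ih _)
    apply MonoidHom.ext
    intro a
    apply Subtype.ext
    funext u
    exact key u a
end

section
/- Let Γ be a group and ω: Γ × Γ → Γ a group homomorphism which is a bijection (a group isomorphism Γ × Γ → Γ). Then the evaluation map K(ω) → Γ, a ↦ a(ε), is a group isomorphism. -/
/-- if `ω : Γ × Γ → Γ` is a bijective group homomorphism, then
evaluation at the empty word is a group isomorphism `K(ω) ≃ Γ`. -/
theorem stmt2 {Γ : Type*} [Group Γ] (ω : Γ × Γ →* Γ) (hω : Function.Bijective ω) :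
    ∃ e : Kgrp ω ≃* Γ, ∀ a : Kgrp ω, e a = (a : List Bool → Γ) [] := by
  let f : Kgrp ω →* Γ := (Pi.evalMonoidHom (fun _ : List Bool => Γ) []).comp (Kgrp ω).subtype
  have hf : Function.Bijective f := by
    constructor
    · intro a b hab
      apply Subtype.ext
      funext u
      induction u using List.reverseRecOn with
      | nil => exact hab
      | append_singleton u i ih =>
        have h := hω.1 (((a.2 u).symm.trans ih).trans (b.2 u))
        cases i
        · exact congrArg Prod.fst h
        · exact congrArg Prod.snd h
    · intro g
      obtain ⟨s, hs⟩ := hω.2.hasRightInverse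
      refine ⟨⟨fun u => u.foldl (fun x i => if i = true then (s x).2 else (s x).1) g, ?_⟩, rfl⟩
      intro u
      simp [List.foldl_append, hs _]
  exact ⟨MulEquiv.ofBijective f hf, fun _ => rfl⟩
end

section
/- Let Γ be a group, ω: Γ × Γ → Γ a group homomorphism, h ∈ Γ, and b: {0,1}* → Γ a map satisfying b(u) = h · ω(b(u·0), b(u·1)) for all u ∈ {0,1}*. Let ω' := ad(h) ∘ ω, i.e. ω'(g₁, g₂) = h · ω(g₁, g₂) · h⁻¹. Then the map θ: K(ω) → K(ω') defined by θ(a)(u) := b(u) · a(u) · b(u)⁻¹ for all u ∈ {0,1}* is a well-defined group isomorphism. -/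
/-- given `h ∈ Γ` and `b : {0,1}* → Γ` with
`b u = h · ω (b (u·0), b (u·1))`, and `ω' := ad(h) ∘ ω`, the map
`θ : K(ω) → K(ω')`, `θ(a)(u) = b u · a u · (b u)⁻¹`, is a well-defined group
isomorphism. -/
theorem stmt5 {Γ : Type*} [Group Γ] (ω : Γ × Γ →* Γ) (h : Γ) (b : List Bool → Γ)
    (hb : ∀ u : List Bool, b u = h * ω (b (u ++ [false]), b (u ++ [true])))
    (ω' : Γ × Γ →* Γ)
    (hω' : ∀ g₁ g₂ : Γ, ω' (g₁, g₂) = h * ω (g₁, g₂) * h⁻¹) :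
    (∀ a : Kgrp ω, (fun u => b u * (a : List Bool → Γ) u * (b u)⁻¹) ∈ Kgrp ω') ∧
    ∃ θ : Kgrp ω ≃* Kgrp ω',
      ∀ (a : Kgrp ω) (u : List Bool),
        (θ a : List Bool → Γ) u = b u * (a : List Bool → Γ) u * (b u)⁻¹ := by
  have key : ∀ a : Kgrp ω,
      (fun u => b u * (a : List Bool → Γ) u * (b u)⁻¹) ∈ Kgrp ω' := by
    intro a u
    have ha := a.2 u
    change b u * (a : List Bool → Γ) u * (b u)⁻¹ = ω' (_, _)
    rw [hω', ← Prod.mk_mul_mk, ← Prod.mk_mul_mk, ← Prod.inv_mk, map_mul, map_mul, map_inv,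
      ← ha, hb u]
    group
  have key' : ∀ a : Kgrp ω',
      (fun u => (b u)⁻¹ * (a : List Bool → Γ) u * b u) ∈ Kgrp ω := by
    intro a u
    have ha := a.2 u
    rw [hω'] at ha
    change (b u)⁻¹ * (a : List Bool → Γ) u * b u = ω (_, _)
    rw [← Prod.mk_mul_mk, ← Prod.mk_mul_mk, ← Prod.inv_mk, map_mul, map_mul, map_inv,
      ha, hb u]
    group
  refine ⟨key, ⟨{ toFun := fun a => ⟨_, key a⟩
                  invFun := fun a => ⟨_, key' a⟩
                  left_inv := ?_
                  right_inv := ?_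
                  map_mul' := ?_ }, fun a u => rfl⟩⟩
  · intro a
    ext u
    simp [mul_assoc]
  · intro a
    ext u
    simp [mul_assoc]
  · intro a c
    ext u
    simp [mul_assoc]
end

section
/- Let Γ be a group, ω: Γ × Γ → Γ a group homomorphism, h ∈ Γ, and b: {0,1}* → Γ a map satisfying b(u) = h · ω(b(u·0), b(u·1)) for all u ∈ {0,1}*. Let ω' := ad(h) ∘ ω and let θ: K(ω) → K(ω') be given by θ(a)(u) := b(u) a(u) b(u)⁻¹. For i ∈ {0,1} define dⁱ: {0,1}* → Γ by dⁱ(u) := b(u) · b(i·u)⁻¹. Then d⁰ and d¹ belong to K(ω'), and for all a ∈ K(ω) and i ∈ {0,1} one has θ(Rᵢ(ω)(a)) = dⁱ · Rᵢ(ω')(θ(a)) · (dⁱ)⁻¹, where Rᵢ denotes the i-th component of R. -/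
/-- with `b`, `h`, `ω' = ad(h) ∘ ω`, `θ(a)(u) = b u · a u · (b u)⁻¹` as in
Statement 5, and `dⁱ(u) := b u · (b (i·u))⁻¹`, the maps `d⁰, d¹` belong to `K(ω')` and
`θ (Rᵢ(ω) a) = dⁱ · Rᵢ(ω') (θ a) · (dⁱ)⁻¹` for all `a ∈ K(ω)` and `i ∈ {0,1}`
(stated pointwise, `θ` and the conjugation being given by their defining formulas). -/
theorem stmt6 {Γ : Type*} [Group Γ] (ω : Γ × Γ →* Γ) (h : Γ) (b : List Bool → Γ)
    (hb : ∀ u : List Bool, b u = h * ω (b (u ++ [false]), b (u ++ [true])))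
    (ω' : Γ × Γ →* Γ)
    (hω' : ∀ g₁ g₂ : Γ, ω' (g₁, g₂) = h * ω (g₁, g₂) * h⁻¹)
    (d : Bool → List Bool → Γ)
    (hd : ∀ (i : Bool) (u : List Bool), d i u = b u * (b (i :: u))⁻¹) :
    (∀ i : Bool, d i ∈ Kgrp ω') ∧
    ∀ (a : Kgrp ω) (i : Bool) (u : List Bool),
      b u * (a : List Bool → Γ) (i :: u) * (b u)⁻¹ =
        d i u * (b (i :: u) * (a : List Bool → Γ) (i :: u) * (b (i :: u))⁻¹) *
          (d i u)⁻¹ := by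
  refine ⟨fun i u => ?_, fun a i u => ?_⟩
  · have h1 := hb u
    have h2 := hb (i :: u)
    rw [hω', hd, hd, hd, ← Prod.mk_mul_mk, ← Prod.inv_mk, map_mul, map_inv, h1, h2]
    simp only [List.cons_append]
    group
  · rw [hd]
    group
end

section
/- Let Γ be a group and ω: Γ × Γ → Γ a group homomorphism. Define S₀ := Γ, Sₙ₊₁ := the image of Sₙ × Sₙ under ω, and Γ_ω := ⋂ₙ Sₙ. Then every element a ∈ K(ω) takes all its values in Γ_ω: a(u) ∈ Γ_ω for all u ∈ {0,1}*. -/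
/-- The decreasing family `S₀ = Γ`, `Sₙ₊₁ = ω (Sₙ × Sₙ)` of subgroups of `Γ`. -/
def Sfam {Γ : Type*} [Group Γ] (ω : Γ × Γ →* Γ) : ℕ → Subgroup Γ
  | 0 => ⊤
  | n + 1 => ((Sfam ω n).prod (Sfam ω n)).map ω

/-- `Γ_ω := ⋂ₙ Sₙ`. -/
def GammaOmega {Γ : Type*} [Group Γ] (ω : Γ × Γ →* Γ) : Subgroup Γ :=
  ⨅ n : ℕ, Sfam ω n

/-- every element `a ∈ K(ω)` takes all its values in `Γ_ω`. -/
theorem stmt9 {Γ : Type*} [Group Γ] (ω : Γ × Γ →* Γ) :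
    ∀ a : Kgrp ω, ∀ u : List Bool, (a : List Bool → Γ) u ∈ GammaOmega ω := by
  intro a u
  refine Subgroup.mem_iInf.2 fun n => ?_
  induction n generalizing u with
  | zero => exact Subgroup.mem_top _
  | succ n ih =>
    exact ⟨(a.1 (u ++ [false]), a.1 (u ++ [true])),
      Subgroup.mem_prod.2 ⟨ih _, ih _⟩, (a.2 u).symm⟩
end

section
/- Let Γ be a group, α an automorphism of Γ, and ω_α: Γ × Γ → Γ the homomorphism (g, h) ↦ α(g). Then the map κ from the group of all functions Q₂ → Γ (with pointwise multiplication) to K(ω_α), defined by κ(f)(u) := α^{-|u|}(f(u00···)) for u ∈ {0,1}* (|u| the length of u), is a group isomorphism. Its inverse sends a ∈ K(ω_α) to the function x ↦ α^{|u|}(a(u)), where u is any word in {0,1}* with x = u00···; in particular this value does not depend on the choice of such u. -/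
/-- `ω_α : Γ × Γ → Γ`, `(g, h) ↦ α g`, for an automorphism `α` of `Γ`. -/
def omegaAut {Γ : Type*} [Group Γ] (α : MulAut Γ) : Γ × Γ →* Γ :=
  (MulEquiv.toMonoidHom α).comp (MonoidHom.fst Γ Γ)

/-- `Q₂`: the eventually-zero binary sequences. -/
def Q2 : Type := {x : ℕ → Bool // ∃ N : ℕ, ∀ n : ℕ, N ≤ n → x n = false}

/-- `u00⋯`: the binary sequence extending the finite word `u` by zeros. -/
def extZero (u : List Bool) : ℕ → Bool := fun n => u.getD n false

theorem extZero_mem (u : List Bool) : ∃ N : ℕ, ∀ n : ℕ, N ≤ n → extZero u n = false :=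
  ⟨u.length, fun _ hn => List.getD_eq_default u false hn⟩

theorem aux_pad {Γ : Type*} [Group Γ] (α : MulAut Γ) (a : Kgrp (omegaAut α)) (u : List Bool)
    (n : ℕ) : (α ^ (u.length + n)) ((a : List Bool → Γ) (u ++ List.replicate n false)) =
      (α ^ u.length) ((a : List Bool → Γ) u) := by
  induction n with
  | zero => simp
  | succ n ih =>
    rw [← ih]
    have h : (a : List Bool → Γ) (u ++ List.replicate n false) =
        α ((a : List Bool → Γ) ((u ++ List.replicate n false) ++ [false])) :=
      a.2 (u ++ List.replicate n false)
    rw [h, List.replicate_succ', ← List.append_assoc, ← add_assoc, pow_succ, MulAut.mul_apply]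

theorem aux_ext {u v : List Bool} (h : extZero u = extZero v) :
    u ++ List.replicate v.length false = v ++ List.replicate u.length false := by
  apply List.ext_getElem
  · simp [add_comm]
  · intro i h1 h2
    have := congrFun h i
    simp only [extZero, List.getD_eq_getElem?_getD] at this
    simp only [List.getElem_append, List.getElem_replicate]
    by_cases hu : i < u.length <;> by_cases hv : i < v.length <;>
      simp_all [not_lt.mpr]

theorem aux_wd {Γ : Type*} [Group Γ] (α : MulAut Γ) (a : Kgrp (omegaAut α)) {u v : List Bool}
    (h : extZero u = extZero v) :
    (α ^ u.length) ((a : List Bool → Γ) u) = (α ^ v.length) ((a : List Bool → Γ) v) := by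
  rw [← aux_pad α a u v.length, ← aux_pad α a v u.length, aux_ext h, add_comm]

theorem aux_ex (x : Q2) : ∃ u : List Bool, x.1 = extZero u := by
  obtain ⟨x, N, hN⟩ := x
  refine ⟨(List.range N).map x, ?_⟩
  funext n
  simp only [extZero, List.getD_eq_getElem?_getD]
  by_cases h : n < N
  · simp [h]
  · simp [h, hN n (not_lt.mp h)]

theorem aux_snoc (u : List Bool) : extZero (u ++ [false]) = extZero u := by
  funext n
  simp only [extZero, List.getD_eq_getElem?_getD]
  rcases lt_trichotomy n u.length with h | h | h
  · simp [h, List.getElem?_append]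
  · subst h; simp
  · rw [List.getElem?_eq_none (by simp; omega), List.getElem?_eq_none (by omega)]

/-- The map `κ` as a homomorphism. -/
def kappaHom {Γ : Type*} [Group Γ] (α : MulAut Γ) : (Q2 → Γ) →* Kgrp (omegaAut α) where
  toFun f := ⟨fun u => (α ^ (-(u.length : ℤ))) (f ⟨extZero u, extZero_mem u⟩), by
    intro u
    change _ = α ((α ^ (-((u ++ [false]).length : ℤ)))
      (f ⟨extZero (u ++ [false]), extZero_mem (u ++ [false])⟩))
    have h : (⟨extZero (u ++ [false]), extZero_mem (u ++ [false])⟩ : Q2) =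
      ⟨extZero u, extZero_mem u⟩ := Subtype.ext (aux_snoc u)
    rw [h, ← MulAut.mul_apply, ← zpow_one_add]
    congr 2
    simp⟩
  map_one' := by
    apply Subtype.ext
    funext u
    exact map_one _
  map_mul' f g := by
    apply Subtype.ext
    funext u
    exact map_mul _ _ _

theorem aux_cancel {Γ : Type*} [Group Γ] (α : MulAut Γ) (n : ℤ) (g : Γ) :
    (α ^ n) ((α ^ (-n)) g) = g := by
  rw [← MulAut.mul_apply, ← zpow_add]; simp

theorem kappa_bij {Γ : Type*} [Group Γ] (α : MulAut Γ) :
    Function.Bijective (kappaHom α) := by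
  constructor
  · intro f g hfg
    funext x
    obtain ⟨u, hu⟩ := aux_ex x
    have hx : x = (⟨extZero u, extZero_mem u⟩ : Q2) := Subtype.ext hu
    have h := congrFun (congrArg Subtype.val hfg) u
    rw [hx]
    exact (α ^ (-(u.length : ℤ))).injective h
  · intro a
    choose w hw using aux_ex
    refine ⟨fun x => (α ^ (w x).length) ((a : List Bool → Γ) (w x)), ?_⟩
    apply Subtype.ext
    funext u
    change (α ^ (-(u.length : ℤ))) ((α ^ (w ⟨extZero u, extZero_mem u⟩).length)
      ((a : List Bool → Γ) (w ⟨extZero u, extZero_mem u⟩))) = _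
    rw [← aux_wd α a (hw ⟨extZero u, extZero_mem u⟩), ← zpow_natCast]
    simpa using aux_cancel α (-(u.length : ℤ)) ((a : List Bool → Γ) u)

/-- for an automorphism `α` of `Γ` and `ω_α (g, h) = α g`, the map
`κ : ∏_{Q₂} Γ → K(ω_α)`, `κ(f)(u) := α^{-|u|} (f (u00⋯))`, is a group isomorphism,
whose inverse sends `a` to `x ↦ α^{|u|} (a u)` for any word `u` with `x = u00⋯`
(in particular the value is independent of the choice of such `u`). -/
theorem stmt11 {Γ : Type*} [Group Γ] (α : MulAut Γ) :
    ∃ e : (Q2 → Γ) ≃* Kgrp (omegaAut α),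
      (∀ (f : Q2 → Γ) (u : List Bool),
        (e f : List Bool → Γ) u =
          (α ^ (-(u.length : ℤ))) (f ⟨extZero u, extZero_mem u⟩)) ∧
      (∀ (a : Kgrp (omegaAut α)) (x : Q2) (u : List Bool),
        x.1 = extZero u →
          e.symm a x = (α ^ (u.length : ℤ)) ((a : List Bool → Γ) u)) := by
  refine ⟨MulEquiv.ofBijective (kappaHom α) (kappa_bij α), fun f u => rfl, ?_⟩
  intro a x u hx
  obtain ⟨f, rfl⟩ := (MulEquiv.ofBijective (kappaHom α) (kappa_bij α)).surjective a
  rw [MulEquiv.symm_apply_apply]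
  have hx' : x = (⟨extZero u, extZero_mem u⟩ : Q2) := Subtype.ext hx
  rw [hx']
  exact (aux_cancel α (u.length : ℤ) _).symm
end

section
/- Let Γ be a group, α an automorphism of Γ, ω_α: Γ × Γ → Γ the homomorphism (g, h) ↦ α(g), and a ∈ K(ω_α). Define supp(a) := {x ∈ C | for every m ∈ ℕ there exists w ∈ {0,1}* with a((x₀x₁···xₘ) ++ w) ≠ e}, where C = (ℕ → {0,1}) is the Cantor space with the product topology, and define S := {x ∈ Q₂ | α^{|u|}(a(u)) ≠ e for some (equivalently, any) word u with x = u00···}. Then S ⊆ supp(a) and supp(a) is contained in the topological closure of S in C; i.e. S is dense in supp(a). -/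
theorem Kgrp_pad {Γ : Type*} [Group Γ] (α : MulAut Γ) (a : Kgrp (omegaAut α))
    (u : List Bool) (n : ℕ) (h : (a : List Bool → Γ) u ≠ 1) :
    (a : List Bool → Γ) (u ++ List.replicate n false) ≠ 1 := by
  induction n with
  | zero => simpa using h
  | succ n ih =>
    intro h1
    apply ih
    have h2 := a.2 (u ++ List.replicate n false)
    rw [List.append_assoc, ← List.replicate_succ', h1] at h2
    rw [h2]
    simp [omegaAut]

/-- for `a ∈ K(ω_α)`, the set
`S = {x ∈ Q₂ | α^{|u|}(a u) ≠ e for some u with x = u00⋯}` is contained in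
`supp(a) = {x ∈ C | ∀ m, ∃ w, a ((x₀⋯xₘ) ++ w) ≠ e}`, and `supp(a)` is contained in
the closure of `S` in the Cantor space `C = ℕ → Bool`; i.e. `S` is dense in `supp(a)`. -/
theorem stmt12 {Γ : Type*} [Group Γ] (α : MulAut Γ) (a : Kgrp (omegaAut α)) :
    {x : ℕ → Bool | ∃ u : List Bool, x = extZero u ∧
        (α ^ (u.length : ℤ)) ((a : List Bool → Γ) u) ≠ 1}
      ⊆ {x : ℕ → Bool | ∀ m : ℕ, ∃ w : List Bool,
          (a : List Bool → Γ) (((List.range (m + 1)).map x) ++ w) ≠ 1} ∧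
    {x : ℕ → Bool | ∀ m : ℕ, ∃ w : List Bool,
        (a : List Bool → Γ) (((List.range (m + 1)).map x) ++ w) ≠ 1}
      ⊆ closure {x : ℕ → Bool | ∃ u : List Bool, x = extZero u ∧
          (α ^ (u.length : ℤ)) ((a : List Bool → Γ) u) ≠ 1} := by
  constructor
  · rintro x ⟨u, rfl, hu⟩ m
    have hu' : (a : List Bool → Γ) u ≠ 1 := fun h => hu (by rw [h, map_one])
    refine ⟨(List.range u.length).map (fun i => extZero u (m + 1 + i)), ?_⟩
    have key : (List.range (m + 1)).map (extZero u) ++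
        (List.range u.length).map (fun i => extZero u (m + 1 + i)) =
        u ++ List.replicate (m + 1) false := by
      have h1 : (List.range (m + 1)).map (extZero u) ++
        (List.range u.length).map (fun i => extZero u (m + 1 + i)) =
        (List.range (m + 1 + u.length)).map (extZero u) := by
        rw [List.range_add (n := m + 1), List.map_append, List.map_map]
        rfl
      rw [h1]
      apply List.ext_getElem
      · simp; omega
      · intro i hi hi'
        simp only [List.getElem_map, List.getElem_range, List.getElem_append,
          List.getElem_replicate, extZero]
        split_ifs with hlt
        · exact List.getD_eq_getElem u false hlt
        · exact List.getD_eq_default u false (not_lt.mp hlt)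
    rw [key]
    exact Kgrp_pad α a u (m + 1) hu'
  · intro x hx
    choose w hw using hx
    refine mem_closure_of_tendsto (b := Filter.atTop)
      (f := fun m : ℕ => extZero ((List.range (m + 1)).map x ++ w m)) ?_
      (Filter.Eventually.of_forall fun m => ⟨_, rfl, fun h => hw m ?_⟩)
    · rw [tendsto_pi_nhds]
      intro i
      refine tendsto_const_nhds.congr' ?_
      filter_upwards [Filter.eventually_ge_atTop i] with m hm
      have hlt : i < ((List.range (m + 1)).map x).length := by simp; omega
      simp only [extZero]
      rw [List.getD_append _ _ _ _ hlt, List.getD_eq_getElem _ _ hlt]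
      simp
    · exact (map_eq_one_iff _ (MulEquiv.injective _)).mp h
end

section
/- Let Γ be a group, α: Γ → Γ an endomorphism, ω_α: Γ × Γ → Γ the homomorphism (g, h) ↦ α(g), and ω_{lim α}: lim Γ × lim Γ → lim Γ the homomorphism (g, h) ↦ (lim α)(g). Then the map θ: K(ω_{lim α}) → K(ω_α) defined by θ(a)(u) := (a(u))₀ (the 0-th coordinate of a(u) ∈ lim Γ) is a well-defined group isomorphism, and it satisfies (θ × θ) ∘ R(ω_{lim α}) = R(ω_α) ∘ θ. -/
/-- `lim Γ`: the inverse limit of `Γ ←α– Γ ←α– Γ ← ⋯`, as the subgroup of `∏_ℕ Γ`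
of sequences `g` with `g n = α (g (n+1))` for all `n`. -/
def limGrp {Γ : Type*} [Group Γ] (α : Γ →* Γ) : Subgroup (ℕ → Γ) where
  carrier := {g | ∀ n : ℕ, g n = α (g (n + 1))}
  mul_mem' := by
    intro a b ha hb n
    simp only [Pi.mul_apply]
    rw [ha n, hb n, ← map_mul]
  one_mem' := by
    intro n
    simp only [Pi.one_apply, map_one]
  inv_mem' := by
    intro a ha n
    simp only [Pi.inv_apply]
    rw [ha n, ← map_inv]

/-- `lim α : lim Γ → lim Γ`, `((lim α) g) n = α (g n)`, as a group homomorphism. -/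
def limAlpha {Γ : Type*} [Group Γ] (α : Γ →* Γ) : limGrp α →* limGrp α where
  toFun g := ⟨fun n => α ((g : ℕ → Γ) n), fun n => congrArg α (g.2 n)⟩
  map_one' := by
    apply Subtype.ext
    funext n
    simp
  map_mul' := by
    intro a b
    apply Subtype.ext
    funext n
    simp

/-- For an endomorphism `φ` of `G`, the homomorphism `G × G → G`, `(g, h) ↦ φ g`. -/
def omegaFst {G : Type*} [Group G] (φ : G →* G) : G × G →* G :=
  φ.comp (MonoidHom.fst G G)

/-- the map `θ : K(ω_{lim α}) → K(ω_α)`, `θ(a)(u) := (a u)₀`, is a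
well-defined group isomorphism satisfying `(θ × θ) ∘ R(ω_{lim α}) = R(ω_α) ∘ θ`. -/
theorem stmt17 {Γ : Type*} [Group Γ] (α : Γ →* Γ) :
    (∀ a : Kgrp (omegaFst (limAlpha α)),
      (fun u : List Bool => ((a : List Bool → limGrp α) u : ℕ → Γ) 0) ∈
        Kgrp (omegaFst α)) ∧
    ∃ θ : Kgrp (omegaFst (limAlpha α)) ≃* Kgrp (omegaFst α),
      (∀ (a : Kgrp (omegaFst (limAlpha α))) (u : List Bool),
        (θ a : List Bool → Γ) u = ((a : List Bool → limGrp α) u : ℕ → Γ) 0) ∧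
      (∀ a : Kgrp (omegaFst (limAlpha α)),
        Rmap (omegaFst α) (θ a) =
          (θ (Rmap (omegaFst (limAlpha α)) a).1,
           θ (Rmap (omegaFst (limAlpha α)) a).2)) := by
  have h1 : ∀ (a : Kgrp (omegaFst (limAlpha α))) (u : List Bool) (n : ℕ),
      ((a : List Bool → limGrp α) u : ℕ → Γ) n =
        α (((a : List Bool → limGrp α) (u ++ [false]) : ℕ → Γ) n) := by
    intro a u n
    exact congrFun (congrArg Subtype.val (a.2 u)) n
  have h2 : ∀ (a : Kgrp (omegaFst (limAlpha α))) (u : List Bool) (n : ℕ),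
      ((a : List Bool → limGrp α) u : ℕ → Γ) (n + 1) =
        ((a : List Bool → limGrp α) (u ++ [false]) : ℕ → Γ) n := by
    intro a u n
    rw [h1 a u (n + 1)]
    exact (((a : List Bool → limGrp α) (u ++ [false])).2 n).symm
  have h3 : ∀ (a : Kgrp (omegaFst (limAlpha α))) (n : ℕ) (u : List Bool),
      ((a : List Bool → limGrp α) (u ++ List.replicate n false) : ℕ → Γ) 0 =
        ((a : List Bool → limGrp α) u : ℕ → Γ) n := by
    intro a n
    induction n with
    | zero => intro u; simp
    | succ k ih =>
      intro u
      rw [h2, ← ih, List.replicate_succ, List.append_assoc, List.singleton_append]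
  have hK : ∀ a : Kgrp (omegaFst (limAlpha α)),
      (fun u : List Bool => ((a : List Bool → limGrp α) u : ℕ → Γ) 0) ∈
        Kgrp (omegaFst α) := fun a u => h1 a u 0
  have hb : ∀ (b : Kgrp (omegaFst α)) (u : List Bool),
      (b : List Bool → Γ) u = α ((b : List Bool → Γ) (u ++ [false])) := fun b u => b.2 u
  refine ⟨hK, ⟨⟨⟨fun a => ⟨_, hK a⟩,
    fun b => ⟨fun u => ⟨fun n => (b : List Bool → Γ) (u ++ List.replicate n false), ?_⟩, ?_⟩,
    ?_, ?_⟩, ?_⟩, ?_, ?_⟩⟩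
  · intro n
    beta_reduce
    rw [hb b, List.append_assoc, ← List.replicate_succ']
  · intro u
    apply Subtype.ext
    funext n
    change (b : List Bool → Γ) (u ++ List.replicate n false) =
      α ((b : List Bool → Γ) ((u ++ [false]) ++ List.replicate n false))
    rw [hb b, List.append_assoc, List.append_assoc, ← List.replicate_succ',
      List.singleton_append, ← List.replicate_succ]
  · intro a
    apply Subtype.ext
    funext u
    apply Subtype.ext
    funext n
    exact h3 a n u
  · intro b
    apply Subtype.ext
    funext u
    simp
  · intro a b
    rfl
  · intro a u
    rfl
  · intro a
    rfl
end

section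
/- Let Γ be a group, α: Γ → Γ an endomorphism, ω_α: Γ × Γ → Γ the homomorphism (g, h) ↦ α(g), and ω_{lim α}: lim Γ × lim Γ → lim Γ the homomorphism (g, h) ↦ (lim α)(g). For each a ∈ K(ω_α), the map â: {0,1}* → ∏_ℕ Γ defined by â(u)ₙ := a(u·0ⁿ) (the word u followed by n zeros) takes values in lim Γ, belongs to K(ω_{lim α}), and satisfies (â(u))₀ = a(u) for all u ∈ {0,1}*. -/
/-- for each `a ∈ K(ω_α)`, the map `â : u ↦ (n ↦ a (u·0ⁿ))` takes
values in `lim Γ`, belongs to `K(ω_{lim α})`, and satisfies `(â u)₀ = a u`. -/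
theorem stmt18 {Γ : Type*} [Group Γ] (α : Γ →* Γ) (a : Kgrp (omegaFst α)) :
    (∀ u : List Bool,
      (fun n : ℕ => (a : List Bool → Γ) (u ++ List.replicate n false)) ∈ limGrp α) ∧
    (∀ b : List Bool → limGrp α,
      (∀ (u : List Bool) (n : ℕ),
        ((b u : ℕ → Γ) n = (a : List Bool → Γ) (u ++ List.replicate n false))) →
      b ∈ Kgrp (omegaFst (limAlpha α)) ∧
        ∀ u : List Bool, (b u : ℕ → Γ) 0 = (a : List Bool → Γ) u) := by
  have key : ∀ u : List Bool, (a : List Bool → Γ) u = α ((a : List Bool → Γ) (u ++ [false])) :=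
    fun u => a.2 u
  refine ⟨?_, ?_⟩
  · intro u n
    change (a : List Bool → Γ) (u ++ List.replicate n false)
      = α ((a : List Bool → Γ) (u ++ List.replicate (n + 1) false))
    rw [key, List.append_assoc, ← List.replicate_succ']
  · intro b hb
    refine ⟨?_, ?_⟩
    · intro u
      apply Subtype.ext
      funext n
      change (b u : ℕ → Γ) n = α ((b (u ++ [false]) : ℕ → Γ) n)
      rw [hb, hb, key, List.append_assoc, List.append_assoc, ← List.replicate_succ',
        List.singleton_append, ← List.replicate_succ]
    · intro u
      rw [hb]
      simp
end

section
/- Let Γ be a group, α: Γ → Γ an endomorphism, and ω_{lim α}: lim Γ × lim Γ → lim Γ the homomorphism (g, h) ↦ (lim α)(g). If a ∈ K(ω_{lim α}) satisfies (a(u))₀ = e for all u ∈ {0,1}* (e the identity of Γ), then a is the identity element of K(ω_{lim α}); that is, (a(u))ₙ = e for all u ∈ {0,1}* and all n ∈ ℕ. -/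
/-- if `a ∈ K(ω_{lim α})` satisfies `(a u)₀ = e` for all words `u`,
then `a` is the identity of `K(ω_{lim α})`: `(a u)ₙ = e` for all `u`, `n`. -/
theorem stmt19 {Γ : Type*} [Group Γ] (α : Γ →* Γ)
    (a : Kgrp (omegaFst (limAlpha α)))
    (ha : ∀ u : List Bool, ((a : List Bool → limGrp α) u : ℕ → Γ) 0 = 1) :
    a = 1 ∧ ∀ (u : List Bool) (n : ℕ), ((a : List Bool → limGrp α) u : ℕ → Γ) n = 1 := by
  have key : ∀ (n : ℕ) (u : List Bool), ((a : List Bool → limGrp α) u : ℕ → Γ) n = 1 := by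
    intro n
    induction n with
    | zero => exact ha
    | succ n ih =>
      intro u
      have h1 : ((a : List Bool → limGrp α) u : ℕ → Γ) (n + 1)
          = α (((a : List Bool → limGrp α) (u ++ [false]) : ℕ → Γ) (n + 1)) :=
        congrArg (fun g : limGrp α => (g : ℕ → Γ) (n + 1)) (a.2 u)
      have h2 := ((a : List Bool → limGrp α) (u ++ [false])).2 n
      rw [h1]
      exact h2.symm.trans (ih _)
  refine ⟨?_, fun u n => key n u⟩
  apply Subtype.ext
  funext u
  apply Subtype.ext
  funext n
  exact key n u
end
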